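/- The correspondence property S₁ ≜ { t | ∀ m d x, m·[Write d x] ≤ t → ∃ m', m'·[Read, Ret x] ≤ m } is a safety property, but S₁ does not belong to Closed_{≺_P}; consequently S₁ ∉ Z_P, and Z_P is a proper subclass of the class of safety properties. -/

import Mathlib

/-!
A violation of `S₁` is witnessed by one finite prefix `m·[Write d x]`, so `S₁` is an intersection
of properties that each constrain a single prefix; those are safety properties, and safety is
stable under intersection. On the other hand `[UndefP] ≺_P t` for every `t`, because the empty
prefix precedes every trace: the only member of `Closed_{≺_P}` that contains `[UndefP]` is the
property of all traces. Now `[UndefP] ∈ S₁` vacuously, while `[Write v v] ∉ S₁`.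
-/

/-!
STATEMENT 8: S₁ is a safety property but is not in Closed_{≺_P}; hence
S₁ ∉ Z_P and Z_P is a proper subclass of the safety properties.
-/

namespace Stmt8

/-- A trace is either a finite list of events or an infinite sequence of events. -/
abbrev Trace (E : Type) := List E ⊕ (ℕ → E)

/-- `prefixOf m t`: the finite trace prefix `m` is a prefix of the trace `t`. -/
def prefixOf {E : Type} (m : List E) : Trace E → Prop
  | .inl l => m <+: l
  | .inr f => ∀ i (h : i < m.length), m.get ⟨i, h⟩ = f i

/-- Well-formedness of a trace wrt the event `u = UndefP`: `u` occurs at most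
once, and only as the last event (so never in an infinite trace). -/
def wf {E : Type} (u : E) : Trace E → Prop
  | .inl l => ∀ i (h : i < l.length), l.get ⟨i, h⟩ = u → i + 1 = l.length
  | .inr f => ∀ n, f n ≠ u

/-- The type of (well-formed) traces: by assumption every trace contains
`UndefP` at most once and only as its last event. -/
abbrev WTrace (E : Type) (u : E) := { t : Trace E // wf u t }

/-- `m` is a prefix of the (well-formed) trace `t`. -/
def wPrefix {E : Type} {u : E} (m : List E) (t : WTrace E u) : Prop :=
  prefixOf m t.1

/-- `t ≺_P t'` (both traces): `t = m'·[UndefP]` for some finite `m' ≤ t'`. -/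
def precP {E : Type} {u : E} (t t' : WTrace E u) : Prop :=
  ∃ m' : List E, t.1 = Sum.inl (m' ++ [u]) ∧ wPrefix m' t'

/-- `t ≺_P m` (trace vs finite prefix): `t = m'·[UndefP]` for some `m' ≤ m`. -/
def precPList {E : Type} {u : E} (t : WTrace E u) (m : List E) : Prop :=
  ∃ m' : List E, t.1 = Sum.inl (m' ++ [u]) ∧ m' <+: m

/-- `π` is a safety property. -/
def Safety {E : Type} {u : E} (π : Set (WTrace E u)) : Prop :=
  ∀ t, t ∉ π → ∃ m : List E, wPrefix m t ∧ ∀ t', wPrefix m t' → t' ∉ π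

/-- `π` is closed under extension of traces with undefined behavior in `P`. -/
def ClosedP {E : Type} {u : E} (π : Set (WTrace E u)) : Prop :=
  ∀ t ∈ π, ∀ t', precP t t' → t' ∈ π

/-- `Z_P ≜ Safety ∩ Closed_{≺_P}`. -/
def ZP {E : Type} {u : E} (π : Set (WTrace E u)) : Prop :=
  Safety π ∧ ClosedP π

/-- The correspondence property
`S₁ ≜ { t | ∀ m d x, m·[Write d x] ≤ t → ∃ m_1, m_1·[Read, Ret x] ≤ m }`. -/
def S1 {E Val : Type} {u : E} (read : E) (ret : Val → E) (write : Val → Val → E) :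
    Set (WTrace E u) :=
  { t | ∀ (m : List E) (d x : Val), wPrefix (m ++ [write d x]) t →
        ∃ m_1 : List E, (m_1 ++ [read, ret x]) <+: m }

section TraceProperties

variable {E : Type} {u : E}

theorem Safety.iInter {ι : Sort*} {π : ι → Set (WTrace E u)} (hπ : ∀ i, Safety (π i)) :
    Safety (⋂ i, π i) := by
  intro t ht
  obtain ⟨i, hti⟩ : ∃ i, t ∉ π i := by simpa using ht
  obtain ⟨m, hmt, hm⟩ := hπ i t hti
  exact ⟨m, hmt, fun t' hmt' ht' => hm t' hmt' (Set.mem_iInter.mp ht' i)⟩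

theorem safety_setOf_wPrefix_imp (m : List E) (p : Prop) :
    Safety {t : WTrace E u | wPrefix m t → p} := by
  intro t ht
  obtain ⟨hmt, hp⟩ : wPrefix m t ∧ ¬p := Classical.not_imp.mp ht
  exact ⟨m, hmt, fun _ hmt' h => hp (h hmt')⟩

theorem nil_wPrefix (t : WTrace E u) : wPrefix [] t := by
  obtain ⟨l | f, _⟩ := t
  · exact List.nil_prefix
  · intro i hi
    exact absurd hi i.not_lt_zero

/-- The trace `[e]` of length one, which is well-formed for every event `e`, including `UndefP`. -/
def WTrace.singleton (u e : E) : WTrace E u :=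
  ⟨.inl [e], fun i hi _ => by simpa using hi⟩

theorem append_singleton_wPrefix_singleton_iff {m : List E} {a e : E} :
    wPrefix (m ++ [a]) (WTrace.singleton u e) ↔ m = [] ∧ a = e := by
  change m ++ [a] <+: [] ++ [e] ↔ m = [] ∧ a = e
  rw [List.prefix_concat_iff, List.append_singleton_inj]
  simp

theorem precP_singleton_undef (t : WTrace E u) : precP (WTrace.singleton u u) t :=
  ⟨[], rfl, nil_wPrefix t⟩

theorem ClosedP.eq_univ_of_singleton_undef_mem {π : Set (WTrace E u)} (hπ : ClosedP π)
    (hu : WTrace.singleton u u ∈ π) : π = Set.univ :=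
  Set.eq_univ_of_forall fun t => hπ _ hu t (precP_singleton_undef t)

end TraceProperties

section Correspondence

variable {E Val : Type} {u : E} (read : E) (ret : Val → E) (write : Val → Val → E)

theorem S1_eq_iInter :
    S1 (u := u) read ret write =
      ⋂ (m : List E) (d : Val) (x : Val),
        {t | wPrefix (m ++ [write d x]) t → ∃ m₁ : List E, (m₁ ++ [read, ret x]) <+: m} := by
  ext t
  simp [S1]

theorem S1_safety : Safety (S1 (u := u) read ret write) := by
  rw [S1_eq_iInter]
  exact .iInter fun m => .iInter fun d => .iInter fun x => safety_setOf_wPrefix_imp _ _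

theorem singleton_mem_S1_iff {e : E} :
    WTrace.singleton u e ∈ S1 read ret write ↔ ∀ d x, write d x ≠ e := by
  simp only [S1, Set.mem_ofPred_eq, append_singleton_wPrefix_singleton_iff]
  constructor
  · intro h d x hw
    obtain ⟨m₁, hm₁⟩ := h [] d x ⟨rfl, hw⟩
    simp at hm₁
  · rintro h m d x ⟨-, hw⟩
    exact absurd hw (h d x)

theorem S1_not_closedP [Nonempty Val] (h_write_undef : ∀ d x, write d x ≠ u) :
    ¬ ClosedP (S1 (u := u) read ret write) := by
  intro hclosed
  obtain ⟨v⟩ := ‹Nonempty Val›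
  have hundef : WTrace.singleton u u ∈ S1 read ret write :=
    (singleton_mem_S1_iff read ret write).mpr h_write_undef
  have hwrite : WTrace.singleton u (write v v) ∈ S1 read ret write :=
    hclosed.eq_univ_of_singleton_undef_mem hundef ▸ Set.mem_univ _
  exact (singleton_mem_S1_iff read ret write).mp hwrite v v rfl

end Correspondence

theorem S1_safety_not_closedP
    {E Val : Type} [Nonempty Val] (u : E)
    (read : E) (ret : Val → E) (write : Val → Val → E)
    -- the events Read, Ret x, Write d x and UndefP are pairwise distinct
    (h_read_undef : read ≠ u)
    (h_ret_undef : ∀ x, ret x ≠ u)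
    (h_write_undef : ∀ d x, write d x ≠ u)
    (h_read_ret : ∀ x, read ≠ ret x)
    (h_read_write : ∀ d x, read ≠ write d x)
    (h_ret_write : ∀ x d y, ret x ≠ write d y)
    (h_ret_inj : Function.Injective ret)
    (h_write_inj : ∀ d x d_1 x_1, write d x = write d_1 x_1 → d = d_1 ∧ x = x_1) :
    Safety (S1 (u := u) read ret write) ∧
    ¬ ClosedP (S1 (u := u) read ret write) ∧
    ¬ ZP (S1 (u := u) read ret write) ∧
    { π : Set (WTrace E u) | ZP π } ⊂ { π : Set (WTrace E u) | Safety π } := by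
  have hsafety := S1_safety (u := u) read ret write
  have hnot_closed := S1_not_closedP (u := u) read ret write h_write_undef
  have hnot_ZP : ¬ ZP (S1 (u := u) read ret write) := fun h => hnot_closed h.2
  exact ⟨hsafety, hnot_closed, hnot_ZP, fun _ h => h.1, fun h => hnot_ZP (h hsafety)⟩

end Stmt8
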